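/- Let Λ and Γ be g-fusion frames for H and K with g-fusion frame operators S_Λ and S_Γ respectively. Then the g-fusion frame operator of the tensor product family Λ ⊗ Γ satisfies S_{Λ⊗Γ} = S_Λ ⊗ S_Γ; that is, for all f ∈ H, g ∈ K, Σ_{i,j} v_i² w_j² P_{V_i ⊗ W_j}(Λ_i ⊗ Γ_j)*(Λ_i ⊗ Γ_j)P_{V_i ⊗ W_j}(f ⊗ g) = S_Λ f ⊗ S_Γ g. -/

import Mathlib

noncomputable section

open Submodule ContinuousLinearMap

local notation "⟪" x ", " y "⟫" => @inner ℂ _ _ x y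

/-- An abstract realization of the Hilbert-space tensor product of `H` and `K`:
a map `tmul : H → K → E` whose inner products multiply and whose elementary
tensors have dense span. -/
structure HilbertTensor (H K E : Type*) [NormedAddCommGroup H] [InnerProductSpace ℂ H]
    [NormedAddCommGroup K] [InnerProductSpace ℂ K]
    [NormedAddCommGroup E] [InnerProductSpace ℂ E] where
  tmul : H → K → E
  inner_tmul : ∀ (f f' : H) (g g' : K),
    ⟪tmul f g, tmul f' g'⟫ = ⟪f, f'⟫ * ⟪g, g'⟫
  dense_span : Dense (Submodule.span ℂ (Set.range fun p : H × K => tmul p.1 p.2) : Set E)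

variable {H K E H' K' E' : Type*}
variable [NormedAddCommGroup H] [InnerProductSpace ℂ H]
variable [NormedAddCommGroup K] [InnerProductSpace ℂ K]
variable [NormedAddCommGroup E] [InnerProductSpace ℂ E]
variable [NormedAddCommGroup H'] [InnerProductSpace ℂ H']
variable [NormedAddCommGroup K'] [InnerProductSpace ℂ K']
variable [NormedAddCommGroup E'] [InnerProductSpace ℂ E']

/-- The orthogonal projection onto a (closed) subspace, as an operator `H →L[ℂ] H`. -/
def projL (V : Submodule ℂ H) [HasOrthogonalProjection V] : H →L[ℂ] H :=
  V.subtypeL.comp (orthogonalProjection V)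

/-- `R` is the tensor product operator `Q ⊗ T`, i.e. it is determined on elementary
tensors by `(Q ⊗ T)(f ⊗ g) = Qf ⊗ Tg`. -/
def IsTensorOp (tp : HilbertTensor H K E) (tp' : HilbertTensor H' K' E')
    (Q : H →L[ℂ] H') (T : K →L[ℂ] K') (R : E →L[ℂ] E') : Prop :=
  ∀ (f : H) (g : K), R (tp.tmul f g) = tp'.tmul (Q f) (T g)

/-- The tensor product `V ⊗ W` of subspaces: the closure of the span of elementary
tensors of elements of `V` and `W`. -/
def tsub (tp : HilbertTensor H K E) (V : Submodule ℂ H) (W : Submodule ℂ K) : Submodule ℂ E :=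
  (Submodule.span ℂ {x : E | ∃ f ∈ V, ∃ g ∈ W, x = tp.tmul f g}).topologicalClosure

/-- `{(V i, Λ i, v i)}` is a g-fusion Bessel sequence in `H` with bound `B`. -/
def IsGFusionBessel {ι : Type*} {Hi : ι → Type*}
    [∀ i, NormedAddCommGroup (Hi i)] [∀ i, InnerProductSpace ℂ (Hi i)]
    (V : ι → Submodule ℂ H) [∀ i, HasOrthogonalProjection (V i)]
    (Λ : ∀ i, H →L[ℂ] Hi i) (v : ι → ℝ) (B : ℝ) : Prop :=
  (∀ i, 0 < v i) ∧ 0 < B ∧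
    ∀ f : H, ∑' i, (v i) ^ 2 * ‖Λ i (projL (V i) f)‖ ^ 2 ≤ B * ‖f‖ ^ 2

/-- `{(V i, Λ i, v i)}` is a g-fusion frame for `H` with bounds `A ≤ B`. -/
def IsGFusionFrame {ι : Type*} {Hi : ι → Type*}
    [∀ i, NormedAddCommGroup (Hi i)] [∀ i, InnerProductSpace ℂ (Hi i)]
    (V : ι → Submodule ℂ H) [∀ i, HasOrthogonalProjection (V i)]
    (Λ : ∀ i, H →L[ℂ] Hi i) (v : ι → ℝ) (A B : ℝ) : Prop :=
  (∀ i, 0 < v i) ∧ 0 < A ∧ A ≤ B ∧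
    ∀ f : H, A * ‖f‖ ^ 2 ≤ ∑' i, (v i) ^ 2 * ‖Λ i (projL (V i) f)‖ ^ 2 ∧
      ∑' i, (v i) ^ 2 * ‖Λ i (projL (V i) f)‖ ^ 2 ≤ B * ‖f‖ ^ 2

/-!
The componentwise identity `P_{V ⊗ W} (Λ ⊗ Γ)* (Λ ⊗ Γ) P_{V ⊗ W} = (P_V Λ* Λ P_V) ⊗ (P_W Γ* Γ P_W)`
reduces the theorem to the unconditional summability of a double family `a i ⊗ b j`, where
`a i = v i² P_{V i} Λ_i* Λ_i P_{V i} f` and `b j` is the analogous family for `g`. The Bessel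
inequality, dualized, gives `‖∑ c i • a i‖² ≤ ∑ p i * |c i|²` with summable weights `p`, and
likewise for `b` with weights `q`. Such bounds are stable under tensor products, with weights
`p i * q j`: expanding the second factors in an orthonormal basis reduces the bound for
`∑ a i ⊗ y i` to the one for `∑ c i • a i`, one coordinate at a time.
-/

theorem hasSum_bilinear_of_summable {𝕜 X Y Z ι κ : Type*} [NontriviallyNormedField 𝕜]
    [NormedAddCommGroup X] [NormedSpace 𝕜 X] [NormedAddCommGroup Y] [NormedSpace 𝕜 Y]
    [NormedAddCommGroup Z] [NormedSpace 𝕜 Z] (β : X →L[𝕜] Y →L[𝕜] Z)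
    {a : ι → X} {b : κ → Y} {x : X} {y : Y} (ha : HasSum a x) (hb : HasSum b y)
    (hab : Summable fun p : ι × κ => β (a p.1) (b p.2)) :
    HasSum (fun p : ι × κ => β (a p.1) (b p.2)) (β x y) := by
  have rows : HasSum (fun i => β (a i) y) (∑' p : ι × κ, β (a p.1) (b p.2)) :=
    hab.hasSum.prod_fiberwise fun i => (β (a i)).hasSum hb
  have columns : HasSum (fun i => β (a i) y) (β x y) := (β.flip y).hasSum ha
  exact rows.unique columns ▸ hab.hasSum

theorem exists_orthonormal_expansion {𝕜 X ι : Type*} [RCLike 𝕜] [NormedAddCommGroup X]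
    [InnerProductSpace 𝕜 X] (s : Finset ι) (y : ι → X) :
    ∃ (n : ℕ) (e : Fin n → X), Orthonormal 𝕜 e ∧ ∀ i ∈ s,
      ∑ k, inner 𝕜 (e k) (y i) • e k = y i ∧ ∑ k, ‖inner 𝕜 (e k) (y i)‖ ^ 2 = ‖y i‖ ^ 2 := by
  let U : Submodule 𝕜 X := span 𝕜 (y '' s)
  have : FiniteDimensional 𝕜 U := .span_of_finite 𝕜 (s.finite_toSet.image y)
  let b := stdOrthonormalBasis 𝕜 U
  refine ⟨_, fun k => b k, b.orthonormal.comp_linearIsometry U.subtypeₗᵢ, fun i hi => ?_⟩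
  let z : U := ⟨y i, subset_span (Set.mem_image_of_mem y hi)⟩
  exact ⟨by simpa using congrArg U.subtype (b.sum_repr' z), b.sum_sq_norm_inner_right z⟩

namespace HilbertTensor

variable (tp : HilbertTensor H K E)

theorem ext_inner_tmul {x y : E}
    (h : ∀ f g, ⟪x, tp.tmul f g⟫ = ⟪y, tp.tmul f g⟫) : x = y :=
  innerSL_inj.1 <| ContinuousLinearMap.ext_on tp.dense_span <| by rintro _ ⟨p, rfl⟩; exact h p.1 p.2

theorem norm_tmul (f : H) (g : K) : ‖tp.tmul f g‖ = ‖f‖ * ‖g‖ := by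
  have h := tp.inner_tmul f f g g
  simp only [inner_self_eq_norm_sq_to_K, ← mul_pow] at h
  exact (pow_left_inj₀ (by positivity) (by positivity) two_ne_zero).1 (by exact_mod_cast h)

/-- The map `(f, g) ↦ f ⊗ g` as a continuous bilinear map. Bilinearity is not part of the
structure `HilbertTensor`; it follows from the formula for inner products. -/
def tmulL : H →L[ℂ] K →L[ℂ] E :=
  LinearMap.mkContinuous₂
    (LinearMap.mk₂ ℂ tp.tmul
      (fun f f' g => tp.ext_inner_tmul fun _ _ => by
        simp only [inner_add_left, tp.inner_tmul, add_mul])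
      (fun c f g => tp.ext_inner_tmul fun _ _ => by
        simp only [inner_smul_left, tp.inner_tmul, mul_assoc])
      (fun f g g' => tp.ext_inner_tmul fun _ _ => by
        simp only [inner_add_left, tp.inner_tmul, mul_add])
      (fun c f g => tp.ext_inner_tmul fun _ _ => by
        simp only [inner_smul_left, tp.inner_tmul, mul_left_comm]))
    1 fun f g => by simp [tp.norm_tmul]

theorem tmulL_apply (f : H) (g : K) : tp.tmulL f g = tp.tmul f g := rfl

theorem norm_sq_sum_tmul_orthonormal {κ : Type*} [Fintype κ] {e : κ → K}
    (he : Orthonormal ℂ e) (x : κ → H) :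
    ‖∑ k, tp.tmul (x k) (e k)‖ ^ 2 = ∑ k, ‖x k‖ ^ 2 := by
  classical
  have h : ⟪∑ k, tp.tmul (x k) (e k), ∑ k, tp.tmul (x k) (e k)⟫ = ∑ k, ⟪x k, x k⟫ := by
    rw [sum_inner]
    simp only [inner_sum, tp.inner_tmul, orthonormal_iff_ite.1 he, mul_ite, mul_one,
      mul_zero, Finset.sum_ite_eq, Finset.mem_univ, if_true]
  simp only [inner_self_eq_norm_sq_to_K] at h
  exact_mod_cast h

end HilbertTensor

/-- A weighted form of the Bessel property of a family of vectors, expressed through its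
synthesis operator: for constant weights `p i = B` this says that `a` is a Bessel sequence with
bound `B`. -/
def IsWeightedBessel {ι : Type*} (a : ι → H) (p : ι → ℝ) : Prop :=
  ∀ (s : Finset ι) (c : ι → ℂ), ‖∑ i ∈ s, c i • a i‖ ^ 2 ≤ ∑ i ∈ s, p i * ‖c i‖ ^ 2

namespace IsWeightedBessel

variable {ι κ : Type*} {a : ι → H} {b : κ → K} {p : ι → ℝ} {q : κ → ℝ}

theorem norm_sq_sum_le (ha : IsWeightedBessel a p) (s : Finset ι) :
    ‖∑ i ∈ s, a i‖ ^ 2 ≤ ∑ i ∈ s, p i := by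
  simpa using ha s 1

theorem weight_nonneg (ha : IsWeightedBessel a p) (i : ι) : 0 ≤ p i := by
  simpa using (sq_nonneg _).trans (ha.norm_sq_sum_le {i})

theorem summable [CompleteSpace H] (ha : IsWeightedBessel a p) (hp : Summable p) :
    Summable a := by
  refine summable_iff_vanishing_norm.2 fun ε hε => ?_
  obtain ⟨s, hs⟩ := summable_iff_vanishing_norm.1 hp (ε ^ 2) (by positivity)
  refine ⟨s, fun t ht => lt_of_pow_lt_pow_left₀ 2 hε.le ?_⟩
  exact (ha.norm_sq_sum_le t).trans_lt ((le_abs_self _).trans_lt (hs t ht))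

theorem norm_sq_sum_tmul_le (tp : HilbertTensor H K E) (ha : IsWeightedBessel a p)
    (s : Finset ι) (y : ι → K) :
    ‖∑ i ∈ s, tp.tmul (a i) (y i)‖ ^ 2 ≤ ∑ i ∈ s, p i * ‖y i‖ ^ 2 := by
  obtain ⟨n, e, he, hy⟩ := exists_orthonormal_expansion (𝕜 := ℂ) s y
  have expansion : ∑ i ∈ s, tp.tmul (a i) (y i) =
      ∑ k, tp.tmul (∑ i ∈ s, ⟪e k, y i⟫ • a i) (e k) := by
    simp only [← tp.tmulL_apply, map_sum, map_smul, sum_apply,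
      smul_apply]
    rw [Finset.sum_comm]
    refine Finset.sum_congr rfl fun i hi => ?_
    conv_lhs => rw [← (hy i hi).1]
    simp only [map_sum, map_smul]
  calc ‖∑ i ∈ s, tp.tmul (a i) (y i)‖ ^ 2
      = ∑ k, ‖∑ i ∈ s, ⟪e k, y i⟫ • a i‖ ^ 2 := by
        rw [expansion, tp.norm_sq_sum_tmul_orthonormal he]
    _ ≤ ∑ k, ∑ i ∈ s, p i * ‖⟪e k, y i⟫‖ ^ 2 := Finset.sum_le_sum fun k _ => ha s _
    _ = ∑ i ∈ s, p i * ‖y i‖ ^ 2 := by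
        rw [Finset.sum_comm]
        refine Finset.sum_congr rfl fun i hi => ?_
        rw [← Finset.mul_sum, (hy i hi).2]

theorem tmul (tp : HilbertTensor H K E) (ha : IsWeightedBessel a p) (hb : IsWeightedBessel b q) :
    IsWeightedBessel (fun x : ι × κ => tp.tmul (a x.1) (b x.2)) fun x => p x.1 * q x.2 := by
  classical
  intro s c
  let row (i : ι) : Finset κ := s.preimage (Prod.mk i) (Prod.mk_right_injective i).injOn
  have mem_row : ∀ x : ι × κ, x ∈ s ↔ x.1 ∈ s.image Prod.fst ∧ x.2 ∈ row x.1 := fun x => by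
    simpa [row] using fun hx => ⟨x.2, hx⟩
  calc ‖∑ x ∈ s, c x • tp.tmul (a x.1) (b x.2)‖ ^ 2
      = ‖∑ i ∈ s.image Prod.fst, tp.tmul (a i) (∑ j ∈ row i, c (i, j) • b j)‖ ^ 2 := by
        simp only [Finset.sum_finset_product s _ row mem_row, ← tp.tmulL_apply, map_sum, map_smul]
    _ ≤ ∑ i ∈ s.image Prod.fst, p i * ‖∑ j ∈ row i, c (i, j) • b j‖ ^ 2 :=
        ha.norm_sq_sum_tmul_le tp _ _
    _ ≤ ∑ i ∈ s.image Prod.fst, p i * ∑ j ∈ row i, q j * ‖c (i, j)‖ ^ 2 := by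
        gcongr with i
        · exact ha.weight_nonneg i
        · exact hb (row i) fun j => c (i, j)
    _ = ∑ x ∈ s, p x.1 * q x.2 * ‖c x‖ ^ 2 := by
        simp only [Finset.sum_finset_product s _ row mem_row, Finset.mul_sum, mul_assoc]

theorem hasSum_tmul [CompleteSpace H] [CompleteSpace K] [CompleteSpace E]
    (tp : HilbertTensor H K E) (ha : IsWeightedBessel a p) (hb : IsWeightedBessel b q)
    (hp : Summable p) (hq : Summable q) :
    HasSum (fun x : ι × κ => tp.tmul (a x.1) (b x.2)) (tp.tmul (∑' i, a i) (∑' j, b j)) :=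
  hasSum_bilinear_of_summable tp.tmulL (ha.summable hp).hasSum (hb.summable hq).hasSum <|
    (ha.tmul tp hb).summable <| hp.mul_of_nonneg hq ha.weight_nonneg hb.weight_nonneg

end IsWeightedBessel

theorem norm_sq_sum_smul_adjoint_le {𝕜 X ι : Type*} [RCLike 𝕜] [NormedAddCommGroup X]
    [InnerProductSpace 𝕜 X] [CompleteSpace X] {G : ι → Type*} [∀ i, NormedAddCommGroup (G i)]
    [∀ i, InnerProductSpace 𝕜 (G i)] [∀ i, CompleteSpace (G i)] (T : ∀ i, X →L[𝕜] G i)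
    {u : ι → ℝ} {B : ℝ} (s : Finset ι) (hu : ∀ i ∈ s, 0 ≤ u i) (hB : 0 ≤ B)
    (hT : ∀ x, ∑ i ∈ s, u i * ‖T i x‖ ^ 2 ≤ B * ‖x‖ ^ 2) (c : ∀ i, G i) :
    ‖∑ i ∈ s, (u i : 𝕜) • adjoint (T i) (c i)‖ ^ 2 ≤ B * ∑ i ∈ s, u i * ‖c i‖ ^ 2 := by
  set y := ∑ i ∈ s, (u i : 𝕜) • adjoint (T i) (c i) with hy
  have norm_sq_le : ‖y‖ ^ 2 ≤ ∑ i ∈ s, u i * (‖c i‖ * ‖T i y‖) := by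
    calc ‖y‖ ^ 2 = ∑ i ∈ s, u i * RCLike.re (inner 𝕜 (c i) (T i y)) := by
          rw [← inner_self_eq_norm_sq (𝕜 := 𝕜)]
          nth_rewrite 1 [hy]
          simp only [sum_inner, inner_smul_left, adjoint_inner_left, map_sum, RCLike.conj_ofReal,
            RCLike.re_ofReal_mul]
      _ ≤ ∑ i ∈ s, u i * (‖c i‖ * ‖T i y‖) := by
          gcongr with i hi
          · exact hu i hi
          · exact re_inner_le_norm _ _
  have cauchy_schwarz : (∑ i ∈ s, u i * (‖c i‖ * ‖T i y‖)) ^ 2 ≤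
      (∑ i ∈ s, u i * ‖c i‖ ^ 2) * ∑ i ∈ s, u i * ‖T i y‖ ^ 2 :=
    Finset.sum_sq_le_sum_mul_sum_of_sq_le_mul s
      (fun i hi => mul_nonneg (hu i hi) (sq_nonneg _))
      (fun i hi => mul_nonneg (hu i hi) (sq_nonneg _)) fun i _ => le_of_eq (by ring)
  have coeff_nonneg : 0 ≤ ∑ i ∈ s, u i * ‖c i‖ ^ 2 :=
    Finset.sum_nonneg fun i hi => mul_nonneg (hu i hi) (sq_nonneg _)
  have norm_fourth_le : ‖y‖ ^ 2 * ‖y‖ ^ 2 ≤ (B * ∑ i ∈ s, u i * ‖c i‖ ^ 2) * ‖y‖ ^ 2 := by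
    calc ‖y‖ ^ 2 * ‖y‖ ^ 2 = (‖y‖ ^ 2) ^ 2 := (sq _).symm
      _ ≤ (∑ i ∈ s, u i * (‖c i‖ * ‖T i y‖)) ^ 2 := by gcongr
      _ ≤ (∑ i ∈ s, u i * ‖c i‖ ^ 2) * (B * ‖y‖ ^ 2) := by
          grw [cauchy_schwarz, hT y]
      _ = (B * ∑ i ∈ s, u i * ‖c i‖ ^ 2) * ‖y‖ ^ 2 := by ring
  rcases (sq_nonneg ‖y‖).eq_or_lt with y_zero | y_pos
  · rw [← y_zero]; exact mul_nonneg hB coeff_nonneg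
  · exact le_of_mul_le_mul_right norm_fourth_le y_pos

theorem isSelfAdjoint_projL [CompleteSpace H] (V : Submodule ℂ H) [HasOrthogonalProjection V] :
    IsSelfAdjoint (projL V) :=
  isSelfAdjoint_starProjection V

theorem inner_projL_right (V : Submodule ℂ H) [HasOrthogonalProjection V] {x : H} (hx : x ∈ V)
    (f : H) : ⟪x, projL V f⟫ = ⟪x, f⟫ :=
  (V.inner_starProjection_left_eq_right x f).symm.trans <| by
    rw [starProjection_eq_self_iff.2 hx]

/-- The contribution `v² P_V Λ* Λ P_V` of a single triple `(V, Λ, v)` to a g-fusion frame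
operator. -/
def gFusionSummand [CompleteSpace H] [CompleteSpace H'] (V : Submodule ℂ H)
    [HasOrthogonalProjection V] (Λ : H →L[ℂ] H') (v : ℝ) : H →L[ℂ] H :=
  v ^ 2 • (projL V ∘L adjoint Λ ∘L Λ ∘L projL V)

section Frames

variable {ι : Type*} {Hi : ι → Type*} [∀ i, NormedAddCommGroup (Hi i)]
  [∀ i, InnerProductSpace ℂ (Hi i)] {V : ι → Submodule ℂ H} [∀ i, HasOrthogonalProjection (V i)]
  {Λ : ∀ i, H →L[ℂ] Hi i} {v : ι → ℝ} {A B : ℝ}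

theorem IsGFusionFrame.isGFusionBessel (h : IsGFusionFrame V Λ v A B) :
    IsGFusionBessel V Λ v B :=
  ⟨h.1, h.2.1.trans_le h.2.2.1, fun f => (h.2.2.2 f).2⟩

-- The sum of a divergent series is `0` by convention, which the lower frame bound rules out.
theorem IsGFusionFrame.summable (h : IsGFusionFrame V Λ v A B) (f : H) :
    Summable fun i => v i ^ 2 * ‖Λ i (projL (V i) f)‖ ^ 2 := by
  obtain ⟨-, hA, -, bounds⟩ := h
  rcases eq_or_ne f 0 with rfl | hf
  · simpa only [map_zero, norm_zero, zero_pow two_ne_zero, mul_zero] using summable_zero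
  · by_contra divergent
    have lower := (bounds f).1
    rw [tsum_eq_zero_of_not_summable divergent] at lower
    exact lower.not_gt (by positivity)

theorem IsGFusionBessel.isWeightedBessel_gFusionSummand [CompleteSpace H]
    [∀ i, CompleteSpace (Hi i)] (h : IsGFusionBessel V Λ v B)
    (hs : ∀ f, Summable fun i => v i ^ 2 * ‖Λ i (projL (V i) f)‖ ^ 2) (f : H) :
    IsWeightedBessel (fun i => gFusionSummand (V i) (Λ i) (v i) f)
      fun i => B * (v i ^ 2 * ‖Λ i (projL (V i) f)‖ ^ 2) := by
  obtain ⟨-, hB, bound⟩ := h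
  intro s c
  have finite_bound (x : H) : ∑ i ∈ s, v i ^ 2 * ‖(Λ i ∘L projL (V i)) x‖ ^ 2 ≤ B * ‖x‖ ^ 2 :=
    ((hs x).sum_le_tsum s fun i _ => by positivity).trans (bound x)
  have synthesis : ∑ i ∈ s, c i • gFusionSummand (V i) (Λ i) (v i) f =
      ∑ i ∈ s, ((v i ^ 2 : ℝ) : ℂ) • adjoint (Λ i ∘L projL (V i)) (c i • Λ i (projL (V i) f)) := by
    refine Finset.sum_congr rfl fun i _ => ?_
    rw [adjoint_comp, (isSelfAdjoint_projL (V i)).adjoint_eq, map_smul, smul_comm, Complex.coe_smul]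
    rfl
  calc ‖∑ i ∈ s, c i • gFusionSummand (V i) (Λ i) (v i) f‖ ^ 2
      ≤ B * ∑ i ∈ s, v i ^ 2 * ‖c i • Λ i (projL (V i) f)‖ ^ 2 := by
        rw [synthesis]
        exact norm_sq_sum_smul_adjoint_le _ s (fun i _ => sq_nonneg (v i)) hB.le finite_bound _
    _ = ∑ i ∈ s, B * (v i ^ 2 * ‖Λ i (projL (V i) f)‖ ^ 2) * ‖c i‖ ^ 2 := by
        rw [Finset.mul_sum]
        refine Finset.sum_congr rfl fun i _ => ?_
        rw [norm_smul]
        ring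

end Frames

theorem isTensorOp_projL (tp : HilbertTensor H K E) (V : Submodule ℂ H) (W : Submodule ℂ K)
    [HasOrthogonalProjection V] [HasOrthogonalProjection W]
    [HasOrthogonalProjection (tsub tp V W)] :
    IsTensorOp tp tp (projL V) (projL W) (projL (tsub tp V W)) := by
  refine fun f g => eq_starProjection_of_mem_orthogonal (K := tsub tp V W) ?_ ?_
  · exact le_topologicalClosure _ <| subset_span
      ⟨_, V.starProjection_apply_mem f, _, W.starProjection_apply_mem g, rfl⟩
  · rw [tsub, orthogonal_closure, ← span_singleton_le_iff_mem, ← isOrtho_iff_le, isOrtho_comm,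
      isOrtho_span]
    rintro _ ⟨a, ha, b, hb, rfl⟩ _ rfl
    rw [inner_sub_right, tp.inner_tmul, tp.inner_tmul, inner_projL_right V ha,
      inner_projL_right W hb, sub_self]

namespace IsTensorOp

variable {H'' K'' E'' : Type*} [NormedAddCommGroup H''] [InnerProductSpace ℂ H'']
  [NormedAddCommGroup K''] [InnerProductSpace ℂ K'']
  [NormedAddCommGroup E''] [InnerProductSpace ℂ E'']
  {tp : HilbertTensor H K E} {tp' : HilbertTensor H' K' E'} {tp'' : HilbertTensor H'' K'' E''}
  {Q : H →L[ℂ] H'} {T : K →L[ℂ] K'} {R : E →L[ℂ] E'}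

theorem comp {Q' : H' →L[ℂ] H''} {T' : K' →L[ℂ] K''} {R' : E' →L[ℂ] E''}
    (h' : IsTensorOp tp' tp'' Q' T' R') (h : IsTensorOp tp tp' Q T R) :
    IsTensorOp tp tp'' (Q' ∘L Q) (T' ∘L T) (R' ∘L R) := fun f g => by
  simp only [ContinuousLinearMap.comp_apply, h f g, h' (Q f) (T g)]

theorem smul (h : IsTensorOp tp tp' Q T R) (r s : ℝ) :
    IsTensorOp tp tp' (r • Q) (s • T) ((r * s) • R) := fun f g => by
  simp only [smul_apply, h f g, ← tp'.tmulL_apply, map_smul_of_tower, mul_smul]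

protected theorem adjoint [CompleteSpace H] [CompleteSpace K] [CompleteSpace E]
    [CompleteSpace H'] [CompleteSpace K'] [CompleteSpace E'] (h : IsTensorOp tp tp' Q T R) :
    IsTensorOp tp' tp Q.adjoint T.adjoint R.adjoint := fun f g => tp.ext_inner_tmul fun f' g' => by
  simp only [adjoint_inner_left, h f' g', tp.inner_tmul, tp'.inner_tmul]

protected theorem gFusionSummand [CompleteSpace H] [CompleteSpace K] [CompleteSpace E]
    [CompleteSpace H'] [CompleteSpace K'] [CompleteSpace E'] (h : IsTensorOp tp tp' Q T R)
    (V : Submodule ℂ H) (W : Submodule ℂ K) [HasOrthogonalProjection V]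
    [HasOrthogonalProjection W] [HasOrthogonalProjection (tsub tp V W)] (v w : ℝ) :
    IsTensorOp tp tp (gFusionSummand V Q v) (gFusionSummand W T w)
      (gFusionSummand (tsub tp V W) R (v * w)) := by
  have projection := isTensorOp_projL tp V W
  simp only [gFusionSummand, mul_pow]
  exact (projection.comp (h.adjoint.comp (h.comp projection))).smul _ _

end IsTensorOp

theorem stmt_9_general {ι κ : Type*} [CompleteSpace H] [CompleteSpace K] [CompleteSpace E]
    {Hi : ι → Type*} [∀ i, NormedAddCommGroup (Hi i)] [∀ i, InnerProductSpace ℂ (Hi i)]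
    [∀ i, CompleteSpace (Hi i)]
    {Kj : κ → Type*} [∀ j, NormedAddCommGroup (Kj j)] [∀ j, InnerProductSpace ℂ (Kj j)]
    [∀ j, CompleteSpace (Kj j)]
    {Eij : ι → κ → Type*} [∀ i j, NormedAddCommGroup (Eij i j)]
    [∀ i j, InnerProductSpace ℂ (Eij i j)] [∀ i j, CompleteSpace (Eij i j)]
    (tp : HilbertTensor H K E) (tpij : ∀ i j, HilbertTensor (Hi i) (Kj j) (Eij i j))
    (V : ι → Submodule ℂ H) [∀ i, HasOrthogonalProjection (V i)]
    (W : κ → Submodule ℂ K) [∀ j, HasOrthogonalProjection (W j)]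
    [∀ i j, HasOrthogonalProjection (tsub tp (V i) (W j))]
    (Λ : ∀ i, H →L[ℂ] Hi i) (Γ : ∀ j, K →L[ℂ] Kj j) (v : ι → ℝ) (w : κ → ℝ) (B D : ℝ)
    (hΛ : IsGFusionBessel V Λ v B)
    (hΛs : ∀ f, Summable fun i => v i ^ 2 * ‖Λ i (projL (V i) f)‖ ^ 2)
    (hΓ : IsGFusionBessel W Γ w D)
    (hΓs : ∀ g, Summable fun j => w j ^ 2 * ‖Γ j (projL (W j) g)‖ ^ 2)
    (Rij : ∀ i j, E →L[ℂ] Eij i j)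
    (hRij : ∀ i j, IsTensorOp tp (tpij i j) (Λ i) (Γ j) (Rij i j)) (f : H) (g : K) :
    HasSum
      (fun p : ι × κ => gFusionSummand (tsub tp (V p.1) (W p.2)) (Rij p.1 p.2) (v p.1 * w p.2)
        (tp.tmul f g))
      (tp.tmul (∑' i, gFusionSummand (V i) (Λ i) (v i) f)
        (∑' j, gFusionSummand (W j) (Γ j) (w j) g)) := by
  simp only [fun p : ι × κ => (hRij p.1 p.2).gFusionSummand (V p.1) (W p.2) (v p.1) (w p.2) f g]
  exact (hΛ.isWeightedBessel_gFusionSummand hΛs f).hasSum_tmul tp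
    (hΓ.isWeightedBessel_gFusionSummand hΓs g) ((hΛs f).mul_left B) ((hΓs g).mul_left D)

/-- `S_{Λ⊗Γ} = S_Λ ⊗ S_Γ`. -/
theorem stmt_9 {ι κ : Type*} [CompleteSpace H] [CompleteSpace K] [CompleteSpace E]
    {Hi : ι → Type*} [∀ i, NormedAddCommGroup (Hi i)] [∀ i, InnerProductSpace ℂ (Hi i)]
    [∀ i, CompleteSpace (Hi i)]
    {Kj : κ → Type*} [∀ j, NormedAddCommGroup (Kj j)] [∀ j, InnerProductSpace ℂ (Kj j)]
    [∀ j, CompleteSpace (Kj j)]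
    {Eij : ι → κ → Type*} [∀ i j, NormedAddCommGroup (Eij i j)]
    [∀ i j, InnerProductSpace ℂ (Eij i j)] [∀ i j, CompleteSpace (Eij i j)]
    (tp : HilbertTensor H K E) (tpij : ∀ i j, HilbertTensor (Hi i) (Kj j) (Eij i j))
    (V : ι → Submodule ℂ H) [∀ i, HasOrthogonalProjection (V i)]
    (W : κ → Submodule ℂ K) [∀ j, HasOrthogonalProjection (W j)]
    [∀ i j, HasOrthogonalProjection (tsub tp (V i) (W j))]
    (Λ : ∀ i, H →L[ℂ] Hi i) (Γ : ∀ j, K →L[ℂ] Kj j)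
    (v : ι → ℝ) (w : κ → ℝ) (A B C D : ℝ)
    (hΛ : IsGFusionFrame V Λ v A B) (hΓ : IsGFusionFrame W Γ w C D)
    (Rij : ∀ i j, E →L[ℂ] Eij i j)
    (hRij : ∀ i j, IsTensorOp tp (tpij i j) (Λ i) (Γ j) (Rij i j))
    (SΛ : H →L[ℂ] H) (SΓ : K →L[ℂ] K)
    (hSΛ : ∀ f : H, SΛ f = ∑' i, ((v i) ^ 2 : ℝ) •
      projL (V i) (ContinuousLinearMap.adjoint (Λ i) (Λ i (projL (V i) f))))
    (hSΓ : ∀ g : K, SΓ g = ∑' j, ((w j) ^ 2 : ℝ) •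
      projL (W j) (ContinuousLinearMap.adjoint (Γ j) (Γ j (projL (W j) g)))) :
    ∀ (f : H) (g : K),
      (∑' p : ι × κ, ((v p.1 * w p.2) ^ 2 : ℝ) •
        projL (tsub tp (V p.1) (W p.2))
          (ContinuousLinearMap.adjoint (Rij p.1 p.2)
            (Rij p.1 p.2 (projL (tsub tp (V p.1) (W p.2)) (tp.tmul f g))))) =
      tp.tmul (SΛ f) (SΓ g) := by
  intro f g
  rw [hSΛ, hSΓ]
  exact (stmt_9_general tp tpij V W Λ Γ v w B D hΛ.isGFusionBessel hΛ.summable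
    hΓ.isGFusionBessel hΓ.summable Rij hRij f g).tsum_eq
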